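/- Let δ ≥ e and s > 0 be real numbers, and define g(z) := δ^z/ln δ + (1−z)·δ^{z+s} for z ∈ ℝ. Then for every real z, g(z) ≤ (δ/(e·ln δ))·(e^{δ^{−s}}/δ^{−s}). Moreover, the maximum of g is attained at z₀ := 1 + (δ^{−s} − 1)/ln δ, where g(z₀) = (δ/(e·ln δ))·(e^{δ^{−s}}/δ^{−s}). -/

import Mathlib

open Real

/-! Put `a = δ ^ (-s)` and `u = a + (1 - z) * log δ`. Since `δ ^ (z + s) = δ ^ z / a` and
`δ ^ z = δ * exp (a - u)`, the function `g` is a constant times `u * exp (-u)`. The latter is at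
most `exp (-1)`, with equality at `u = 1`, that is, at `z = 1 + (a - 1) / log δ`. -/

/-- The function `g` from the robustness analysis of the randomized multi-option ski rental
algorithm with parameters `δ` and `s`; its maximum over `z` is the robustness ratio. -/
noncomputable def skiRentalG (δ s z : ℝ) : ℝ :=
  δ ^ z / log δ + (1 - z) * δ ^ (z + s)

/-- The point `z₀` at which the function `g` of the robustness analysis attains its maximum. -/
noncomputable def skiRentalArgmax (δ s : ℝ) : ℝ :=
  1 + (δ ^ (-s) - 1) / log δ

/-- The robustness ratio `ρ(δ, s)` of the randomized multi-option ski rental algorithm. -/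
noncomputable def robustnessRatio (δ s : ℝ) : ℝ :=
  δ / (exp 1 * log δ) * (exp (δ ^ (-s)) / δ ^ (-s))

theorem rpow_eq_mul_exp_neg_one_sub_mul_log {δ : ℝ} (hδ : 0 < δ) (z : ℝ) :
    δ ^ z = δ * exp (-((1 - z) * log δ)) :=
  calc
    δ ^ z = exp (log δ + -((1 - z) * log δ)) := by rw [rpow_def_of_pos hδ]; ring_nf
    _ = δ * exp (-((1 - z) * log δ)) := by rw [exp_add, exp_log hδ]

theorem robustnessRatio_eq_mul_exp_neg_one (δ s : ℝ) :
    robustnessRatio δ s = δ / log δ * (exp (δ ^ (-s)) / δ ^ (-s)) * exp (-1) := by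
  rw [robustnessRatio, exp_neg]
  ring

theorem skiRentalG_eq_mul_mul_exp_neg {δ : ℝ} (hδ : 0 < δ) (hδ₁ : δ ≠ 1) (s z : ℝ) :
    skiRentalG δ s z = δ / log δ * (exp (δ ^ (-s)) / δ ^ (-s)) *
      ((δ ^ (-s) + (1 - z) * log δ) * exp (-(δ ^ (-s) + (1 - z) * log δ))) := by
  have hlog : log δ ≠ 0 := log_ne_zero_of_pos_of_ne_one hδ hδ₁
  have hshift : δ ^ (z + s) = δ ^ z / δ ^ (-s) := by rw [← rpow_sub hδ, sub_neg_eq_add]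
  have hbase : δ ^ z = δ * exp (δ ^ (-s)) * exp (-(δ ^ (-s) + (1 - z) * log δ)) := by
    rw [rpow_eq_mul_exp_neg_one_sub_mul_log hδ, mul_assoc, ← exp_add, neg_add, add_neg_cancel_left]
  have ha : δ ^ (-s) ≠ 0 := (rpow_pos_of_pos hδ (-s)).ne'
  calc
    skiRentalG δ s z = δ ^ z / log δ + (1 - z) * (δ ^ z / δ ^ (-s)) := by rw [skiRentalG, hshift]
    _ = δ ^ z * (δ ^ (-s) + (1 - z) * log δ) / (log δ * δ ^ (-s)) := by field_simp
    _ = _ := by rw [hbase]; ring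

theorem rpow_neg_add_one_sub_skiRentalArgmax_mul_log {δ : ℝ} (hlog : log δ ≠ 0) (s : ℝ) :
    δ ^ (-s) + (1 - skiRentalArgmax δ s) * log δ = 1 := by
  rw [skiRentalArgmax, sub_add_cancel_left, neg_mul, div_mul_cancel₀ _ hlog]
  ring

theorem skiRentalG_le_robustnessRatio {δ : ℝ} (hδ : 1 < δ) (s z : ℝ) :
    skiRentalG δ s z ≤ robustnessRatio δ s := by
  have hδ₀ : 0 < δ := one_pos.trans hδ
  have hlog : 0 < log δ := log_pos hδ
  rw [skiRentalG_eq_mul_mul_exp_neg hδ₀ hδ.ne', robustnessRatio_eq_mul_exp_neg_one]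
  gcongr
  exact mul_exp_neg_le_exp_neg_one _

theorem skiRentalG_skiRentalArgmax {δ : ℝ} (hδ : 0 < δ) (hδ₁ : δ ≠ 1) (s : ℝ) :
    skiRentalG δ s (skiRentalArgmax δ s) = robustnessRatio δ s := by
  have hlog : log δ ≠ 0 := log_ne_zero_of_pos_of_ne_one hδ hδ₁
  rw [skiRentalG_eq_mul_mul_exp_neg hδ hδ₁, rpow_neg_add_one_sub_skiRentalArgmax_mul_log hlog,
    one_mul, robustnessRatio_eq_mul_exp_neg_one]

theorem rand_rob_lemma_g_general {δ : ℝ} (hδ : 1 < δ) (s : ℝ) :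
    (∀ z : ℝ, skiRentalG δ s z ≤ robustnessRatio δ s) ∧
      skiRentalG δ s (skiRentalArgmax δ s) = robustnessRatio δ s :=
  ⟨skiRentalG_le_robustnessRatio hδ s, skiRentalG_skiRentalArgmax (one_pos.trans hδ) hδ.ne' s⟩

theorem rand_rob_lemma_g (δ s : ℝ) (hδ : Real.exp 1 ≤ δ) (hs : 0 < s) :
    (∀ z : ℝ, δ ^ z / Real.log δ + (1 - z) * δ ^ (z + s) ≤
      δ / (Real.exp 1 * Real.log δ) * (Real.exp (δ ^ (-s)) / δ ^ (-s))) ∧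
    (δ ^ (1 + (δ ^ (-s) - 1) / Real.log δ) / Real.log δ
        + (1 - (1 + (δ ^ (-s) - 1) / Real.log δ)) * δ ^ ((1 + (δ ^ (-s) - 1) / Real.log δ) + s)
      = δ / (Real.exp 1 * Real.log δ) * (Real.exp (δ ^ (-s)) / δ ^ (-s))) :=
  rand_rob_lemma_g_general ((one_lt_exp_iff.2 one_pos).trans_le hδ) s
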